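/- For every n ≥ 2, the quotient group B_n/C(B_n) of the braid group B_n on n strings by its center is linear; more precisely, there is an injective group homomorphism from B_n/C(B_n) into GL((n(n−1)/2)², ℝ). -/

import Mathlib

/-- The braid relations on `n` strings. -/
def braidRels (n : ℕ) : Set (FreeGroup (Fin (n - 1))) :=
  {r | (∃ i j : Fin (n - 1), (i : ℕ) + 2 ≤ (j : ℕ) ∧
          r = FreeGroup.of i * FreeGroup.of j * (FreeGroup.of i)⁻¹ * (FreeGroup.of j)⁻¹) ∨
       (∃ i j : Fin (n - 1), (j : ℕ) = (i : ℕ) + 1 ∧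
          r = FreeGroup.of i * FreeGroup.of j * FreeGroup.of i *
              (FreeGroup.of j * FreeGroup.of i * FreeGroup.of j)⁻¹)}

/-- The braid group `B_n` on `n` strings. -/
def BraidGroup (n : ℕ) : Type :=
  PresentedGroup (braidRels n)

instance (n : ℕ) : Group (BraidGroup n) := by
  unfold BraidGroup; infer_instance

/-!
The braid group acts faithfully on the Lawrence–Krammer module of dimension `n(n-1)/2`. As every
braid is a fraction of positive braids, it suffices that positive braids act faithfully. If `q` lies
in `(0, 1)` and `t` is transcendental, then `t` can be specialised to `0`, where positive braids
preserve the cone of vectors with nonnegative coordinates. There `σₛ` kills the basis vector of the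
pair `(s, s + 1)`, and conversely the positivity shows, by induction on the length, that a positive
braid which kills this vector is right divisible by `σₛ`. So the action of a positive braid
determines its last letters, and the braid is recovered letter by letter.

A group with a faithful image in an algebra acts by conjugation on the subalgebra which this image
generates, and the kernel of this action is the center. For the braid group the algebra consists of
the endomorphisms of the Lawrence–Krammer module, which has dimension `(n(n-1)/2)²`.
-/

section CenterQuotient

open Module

variable {K : Type*} [Field K]

theorem exists_injective_end_hom_matrix {W : Type*} [AddCommGroup W] [Module K W]
    [FiniteDimensional K W] {d : ℕ} (hd : finrank K W ≤ d) :
    ∃ φ : End K W →* Matrix (Fin d) (Fin d) K, Function.Injective φ := by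
  let C := Fin (d - finrank K W) → K
  let e : (W × C) ≃ₗ[K] (Fin d → K) := LinearEquiv.ofFinrankEq _ _ (by simp [C, hd])
  let extend : End K W →* End K (W × C) :=
    (LinearMap.prodMapRingHom K W C).toMonoidHom.comp (MonoidHom.inl _ (End K C))
  have hextend : Function.Injective extend := fun f g hfg => LinearMap.ext fun w =>
    congrArg Prod.fst (LinearMap.congr_fun hfg (w, 0))
  let toMatrix := (e.conjAlgEquiv K).trans algEquivMatrix'
  exact ⟨(toMatrix : _ →* _).comp extend, toMatrix.injective.comp hextend⟩

variable {G : Type*} [Group G] {B : Type*} [Ring B] [Algebra K B]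

/-- The conjugation action of a group `G` on the subalgebra generated by its image in a
`K`-algebra `B`. -/
noncomputable def conjOnAdjoin (ρ : G →* B) : G →* End K (Algebra.adjoin K (Set.range ρ)) :=
  (DistribMulAction.toModuleEnd K (Algebra.adjoin K (Set.range ρ))).comp <|
    ConjAct.toConjAct.toMonoidHom.comp <| MonoidHom.toHomUnits <|
      ρ.codRestrict (Algebra.adjoin K (Set.range ρ)) fun g => Algebra.subset_adjoin ⟨g, rfl⟩

theorem coe_conjOnAdjoin_apply (ρ : G →* B) (g : G) (a : Algebra.adjoin K (Set.range ρ)) :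
    (conjOnAdjoin ρ g a : B) = ρ g * a * ρ g⁻¹ := rfl

theorem conjOnAdjoin_apply_eq_self_iff (ρ : G →* B) (g : G) (a : Algebra.adjoin K (Set.range ρ)) :
    conjOnAdjoin ρ g a = a ↔ Commute (ρ g) a := by
  rw [← Subtype.coe_inj, coe_conjOnAdjoin_apply]
  exact (ρ.toHomUnits g).mul_inv_eq_iff_eq_mul

theorem ker_conjOnAdjoin {ρ : G →* B} (hρ : Function.Injective ρ) :
    (conjOnAdjoin (K := K) ρ).ker = Subgroup.center G := by
  ext g
  rw [MonoidHom.mem_ker, Subgroup.mem_center_iff]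
  constructor
  · intro hg h
    have hcomm : Commute (ρ g) (ρ h) :=
      (conjOnAdjoin_apply_eq_self_iff ρ g ⟨ρ h, Algebra.subset_adjoin ⟨h, rfl⟩⟩).1 (by rw [hg]; rfl)
    exact hρ (by simpa only [map_mul] using hcomm.eq.symm)
  · intro hg
    have hcomm : Algebra.adjoin K (Set.range ρ) ≤ Subalgebra.centralizer K {ρ g} := by
      rw [Algebra.adjoin_le_iff]
      rintro _ ⟨h, rfl⟩ _ rfl
      rw [← map_mul, ← map_mul, hg h]
    ext1 a
    exact (conjOnAdjoin_apply_eq_self_iff ρ g a).2 (hcomm a.2 _ rfl)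

theorem exists_injective_quotient_center_hom_GL [FiniteDimensional K B] {ρ : G →* B}
    (hρ : Function.Injective ρ) :
    ∃ φ : G ⧸ Subgroup.center G →* Matrix.GeneralLinearGroup (Fin (finrank K B)) K,
      Function.Injective φ := by
  obtain ⟨ψ, hψ⟩ := exists_injective_end_hom_matrix
    (Submodule.finrank_le (Algebra.adjoin K (Set.range ρ)).toSubmodule)
  let Φ : G →* Matrix.GeneralLinearGroup (Fin (finrank K B)) K :=
    (ψ.comp (conjOnAdjoin ρ)).toHomUnits
  have hker : Φ.ker = Subgroup.center G := by
    ext g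
    rw [← ker_conjOnAdjoin (K := K) hρ, MonoidHom.mem_ker, MonoidHom.mem_ker, ← Units.val_inj]
    exact map_eq_one_iff ψ hψ
  exact ⟨(QuotientGroup.kerLift Φ).comp (QuotientGroup.quotientMulEquivOfEq hker.symm).toMonoidHom,
    (QuotientGroup.kerLift_injective Φ).comp (MulEquiv.injective _)⟩

end CenterQuotient

theorem partialProd_last {M : Type*} [Monoid M] {N : ℕ} (s : Fin N → M) :
    Fin.partialProd s (Fin.last N) = (List.ofFn s).prod := by
  simp [Fin.partialProd, List.take_of_length_le]

/-- The braid relations for a family `s` of elements of a monoid. -/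
structure IsBraidFamily {M : Type*} [Monoid M] {N : ℕ} (s : Fin N → M) : Prop where
  commute : ∀ i j : Fin N, (i : ℕ) + 2 ≤ j → Commute (s i) (s j)
  braid : ∀ i j : Fin N, (j : ℕ) = i + 1 → s i * s j * s i = s j * s i * s j

namespace IsBraidFamily

theorem unit {M : Type*} [Monoid M] {N : ℕ} {s : Fin N → M} (hs : IsBraidFamily s)
    (h : ∀ i, IsUnit (s i)) : IsBraidFamily fun i => (h i).unit where
  commute i j hij := Units.ext (hs.commute i j hij)
  braid i j hij := Units.ext (hs.braid i j hij)

variable {G : Type*} [Group G] {N : ℕ} {s : Fin N → G}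

theorem commute_partialProd (hs : IsBraidFamily s) (m : Fin (N + 1)) (j : Fin N)
    (hmj : (m : ℕ) + 1 ≤ j) : Commute (Fin.partialProd s m) (s j) := by
  induction m using Fin.induction with
  | zero => simp only [Fin.partialProd_zero, Commute.one_left]
  | succ m ih =>
    simp only [Fin.val_succ, Fin.val_castSucc] at hmj ih
    rw [Fin.partialProd_succ]
    exact (ih (by omega)).mul_left (hs.commute m j hmj)

theorem partialProd_mul_eq_succ_mul_partialProd (hs : IsBraidFamily s) (i j : Fin N)
    (hij : (j : ℕ) = i + 1) (m : Fin (N + 1)) (hjm : (j : ℕ) < m) :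
    Fin.partialProd s m * s i = s j * Fin.partialProd s m := by
  induction m using Fin.induction with
  | zero => simp at hjm
  | succ m ih =>
    simp only [Fin.val_succ, Fin.val_castSucc] at hjm ih
    obtain hjm | rfl : j < m ∨ j = m := by omega
    · rw [Fin.partialProd_succ, mul_assoc, ← (hs.commute i m (by omega)).eq, ← mul_assoc,
        ih hjm, mul_assoc]
    · have hcastSucc : j.castSucc = i.succ := Fin.ext (by simpa using hij)
      have hcomm := hs.commute_partialProd i.castSucc j (by simp [hij])
      rw [Fin.partialProd_succ, hcastSucc, Fin.partialProd_succ]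
      calc Fin.partialProd s i.castSucc * s i * s j * s i
          = Fin.partialProd s i.castSucc * (s i * s j * s i) := by group
        _ = Fin.partialProd s i.castSucc * s j * (s i * s j) := by rw [hs.braid i j hij]; group
        _ = s j * (Fin.partialProd s i.castSucc * s i * s j) := by rw [hcomm.eq]; group

theorem prod_mul_eq_succ_mul_prod (hs : IsBraidFamily s) (i j : Fin N) (hij : (j : ℕ) = i + 1) :
    (List.ofFn s).prod * s i = s j * (List.ofFn s).prod := by
  simpa only [partialProd_last] using
    hs.partialProd_mul_eq_succ_mul_partialProd i j hij (Fin.last N) j.isLt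

theorem head_mul_prod_mul_partialProd {s : Fin (N + 1) → G} (hs : IsBraidFamily s)
    (m : Fin (N + 1)) :
    s 0 * (List.ofFn s).prod * Fin.partialProd s m.castSucc =
      Fin.partialProd s m.succ * (List.ofFn s).prod := by
  induction m using Fin.induction with
  | zero => rw [Fin.partialProd_succ, Fin.castSucc_zero, Fin.partialProd_zero, one_mul, mul_one]
  | succ m ih =>
    have hshift := hs.prod_mul_eq_succ_mul_prod m.castSucc m.succ (by simp)
    rw [Fin.castSucc_succ, Fin.partialProd_succ, ← mul_assoc, ih, mul_assoc, hshift, ← mul_assoc,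
      ← Fin.castSucc_succ, ← Fin.partialProd_succ]

theorem head_mul_prod_sq {s : Fin (N + 1) → G} (hs : IsBraidFamily s) :
    s 0 * (List.ofFn s).prod ^ 2 = (List.ofFn s).prod ^ 2 * s (Fin.last N) := by
  have hlast : Fin.partialProd s (Fin.last N).succ = (List.ofFn s).prod :=
    partialProd_last s
  calc s 0 * (List.ofFn s).prod ^ 2
      = s 0 * (List.ofFn s).prod * Fin.partialProd s (Fin.last N).castSucc * s (Fin.last N) := by
        rw [mul_assoc _ _ (s (Fin.last N)), ← Fin.partialProd_succ, hlast, pow_two, mul_assoc]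
    _ = (List.ofFn s).prod ^ 2 * s (Fin.last N) := by
        rw [hs.head_mul_prod_mul_partialProd, hlast, pow_two]

theorem prod_pow_mul_head {s : Fin (N + 1) → G} (hs : IsBraidFamily s) (k : Fin (N + 1)) :
    (List.ofFn s).prod ^ (k : ℕ) * s 0 = s k * (List.ofFn s).prod ^ (k : ℕ) := by
  induction k using Fin.induction with
  | zero => simp
  | succ k ih =>
    have hshift := hs.prod_mul_eq_succ_mul_prod k.castSucc k.succ (by simp)
    rw [Fin.val_castSucc] at ih
    rw [Fin.val_succ, pow_succ', mul_assoc, ih, ← mul_assoc, hshift, mul_assoc]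

-- Conjugation by `δ = s 0 * ⋯ * s N` carries `s 0` to `s N` in `N` steps, and conjugation by `δ²`
-- carries `s N` back to `s 0`.
theorem commute_prod_pow (hs : IsBraidFamily s) (k : Fin N) :
    Commute ((List.ofFn s).prod ^ (N + 1)) (s k) := by
  obtain _ | N := N
  · exact k.elim0
  set δ := (List.ofFn s).prod
  have hzero : Commute (δ ^ (N + 2)) (s 0) := by
    have hlast : δ ^ N * s 0 = s (Fin.last N) * δ ^ N := hs.prod_pow_mul_head (Fin.last N)
    rw [commute_iff_eq, add_comm, pow_add, mul_assoc, hlast, ← mul_assoc, ← hs.head_mul_prod_sq,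
      mul_assoc]
  have hconj : s k = δ ^ (k : ℕ) * s 0 * (δ ^ (k : ℕ))⁻¹ :=
    eq_mul_inv_of_mul_eq (hs.prod_pow_mul_head k).symm
  have hpow : Commute (δ ^ (N + 2)) (δ ^ (k : ℕ)) := Commute.pow_pow_self _ _ _
  rw [hconj]
  exact (hpow.mul_right hzero).mul_right hpow.inv_right

end IsBraidFamily

section Fractions

variable {G : Type*} [Group G]

theorem exists_mul_eq_of_commute_of_eq_mul {P : Submonoid G} {z u s v : G} (hu : u ∈ P)
    (hv : v ∈ P) (hz : z = u * s * v) (hcomm : Commute z u) : ∃ p ∈ P, s * p = z :=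
  ⟨v * u, mul_mem hv hu, mul_left_cancel (a := u) (by rw [← hcomm.eq, hz]; group)⟩

theorem exists_eq_mul_inv_of_mem_closure {P : Submonoid G} {S : Set G} (hSP : S ⊆ P) {z : G}
    (hz : z ∈ P) (hcomm : ∀ p ∈ P, Commute z p) (hdvd : ∀ s ∈ S, ∃ p ∈ P, s * p = z) {g : G}
    (hg : g ∈ Subgroup.closure S) : ∃ p ∈ P, ∃ r ∈ P, g = p * r⁻¹ := by
  suffices ∃ p ∈ P, ∃ k : ℕ, g = p * (z ^ k)⁻¹ by
    obtain ⟨p, hp, k, rfl⟩ := this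
    exact ⟨p, hp, z ^ k, pow_mem hz k, rfl⟩
  have hcomm_pow (k : ℕ) {p : G} (hp : p ∈ P) : (z ^ k)⁻¹ * p = p * (z ^ k)⁻¹ :=
    ((hcomm p hp).pow_left k).inv_left.eq
  induction hg using Subgroup.closure_induction_right with
  | one => exact ⟨1, one_mem _, 0, by simp⟩
  | mul_right x _ s hs ih =>
    obtain ⟨p, hp, k, rfl⟩ := ih
    exact ⟨p * s, mul_mem hp (hSP hs), k, by rw [mul_assoc, hcomm_pow k (hSP hs), mul_assoc]⟩
  | mul_inv_cancel x _ s hs ih =>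
    obtain ⟨p, hp, k, rfl⟩ := ih
    obtain ⟨p', hp', hsp'⟩ := hdvd s hs
    have hsinv : s⁻¹ = p' * z⁻¹ := by rw [← hsp']; group
    refine ⟨p * p', mul_mem hp hp', k + 1, ?_⟩
    calc p * (z ^ k)⁻¹ * s⁻¹ = p * ((z ^ k)⁻¹ * p') * z⁻¹ := by rw [hsinv]; group
      _ = p * p' * (z ^ (k + 1))⁻¹ := by rw [hcomm_pow k hp', pow_succ']; group

theorem IsBraidFamily.exists_eq_mul_inv {N : ℕ} {s : Fin N → G} (hs : IsBraidFamily s)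
    {g : G} (hg : g ∈ Subgroup.closure (Set.range s)) :
    ∃ p ∈ Submonoid.closure (Set.range s), ∃ r ∈ Submonoid.closure (Set.range s),
      g = p * r⁻¹ := by
  set P := Submonoid.closure (Set.range s) with hP
  set δ := (List.ofFn s).prod with hδ
  have hprod_mem {l : List G} (hl : l ⊆ List.ofFn s) : l.prod ∈ P :=
    list_prod_mem fun x hx => Submonoid.subset_closure ((List.mem_ofFn' s x).1 (hl hx))
  have hδP : δ ∈ P := hprod_mem (List.Subset.refl _)
  have hcomm : ∀ p ∈ P, Commute (δ ^ (N + 1)) p := by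
    suffices P ≤ Submonoid.centralizer {δ ^ (N + 1)} from fun p hp => this hp _ rfl
    rw [hP, Submonoid.closure_le]
    rintro _ ⟨k, rfl⟩ _ rfl
    exact hs.commute_prod_pow k
  refine exists_eq_mul_inv_of_mem_closure Submonoid.subset_closure (pow_mem hδP (N + 1)) hcomm
    ?_ hg
  rintro _ ⟨k, rfl⟩
  obtain ⟨l₁, l₂, hsplit⟩ := List.append_of_mem ((List.mem_ofFn' s (s k)).2 ⟨k, rfl⟩)
  have hl₁ : l₁.prod ∈ P := hprod_mem (by simp [hsplit])
  have hl₂ : l₂.prod ∈ P := hprod_mem (by rw [hsplit]; intro; grind)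
  refine exists_mul_eq_of_commute_of_eq_mul hl₁ (mul_mem hl₂ (pow_mem hδP N)) ?_ (hcomm _ hl₁)
  have hδsplit : δ = l₁.prod * s k * l₂.prod := by
    rw [hδ, hsplit, List.prod_append, List.prod_cons, mul_assoc]
  rw [pow_succ', ← mul_assoc, ← hδsplit]

end Fractions

/-- The defining relations of the braid monoid on `n` strings. -/
inductive BraidMonoid.Rel (n : ℕ) : FreeMonoid (Fin (n - 1)) → FreeMonoid (Fin (n - 1)) → Prop
  | commute (i j : Fin (n - 1)) (h : (i : ℕ) + 2 ≤ j) :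
      Rel n (.of i * .of j) (.of j * .of i)
  | braid (i j : Fin (n - 1)) (h : (j : ℕ) = i + 1) :
      Rel n (.of i * .of j * .of i) (.of j * .of i * .of j)

/-- The braid monoid on `n` strings: the monoid with the generators and relations of the braid
group. -/
abbrev BraidMonoid (n : ℕ) : Type :=
  PresentedMonoid (BraidMonoid.Rel n)

namespace BraidMonoid

variable {n : ℕ} {M : Type*} [Monoid M]

/-- The generator `σᵢ` of the braid monoid. -/
def σ (i : Fin (n - 1)) : BraidMonoid n :=
  PresentedMonoid.of _ i

theorem isBraidFamily_σ : IsBraidFamily (σ : Fin (n - 1) → BraidMonoid n) where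
  commute i j h := PresentedMonoid.mk_eq_mk_of_rel (Rel.commute i j h)
  braid i j h := PresentedMonoid.mk_eq_mk_of_rel (Rel.braid i j h)

/-- The homomorphism out of the braid monoid determined by a family satisfying the braid
relations. -/
def lift {s : Fin (n - 1) → M} (hs : IsBraidFamily s) : BraidMonoid n →* M :=
  PresentedMonoid.lift s <| by
    rintro _ _ (⟨i, j, h⟩ | ⟨i, j, h⟩)
    · simpa only [map_mul, FreeMonoid.lift_eval_of] using (hs.commute i j h).eq
    · simpa only [map_mul, FreeMonoid.lift_eval_of] using hs.braid i j h

@[simp]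
theorem lift_σ {s : Fin (n - 1) → M} (hs : IsBraidFamily s) (i : Fin (n - 1)) :
    lift hs (σ i) = s i :=
  PresentedMonoid.lift_of ..

theorem hom_ext {φ ψ : BraidMonoid n →* M} (h : ∀ i, φ (σ i) = ψ (σ i)) : φ = ψ :=
  PresentedMonoid.ext _ h

theorem closure_range_σ : Submonoid.closure (Set.range (σ : Fin (n - 1) → BraidMonoid n)) = ⊤ :=
  PresentedMonoid.closure_range_of _

@[elab_as_elim]
theorem induction_mul_σ {p : BraidMonoid n → Prop} (one : p 1)
    (mul_σ : ∀ m i, p m → p (m * σ i)) (m : BraidMonoid n) : p m := by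
  have hm : m ∈ Submonoid.closure (Set.range σ) := closure_range_σ ▸ Submonoid.mem_top m
  induction hm using Submonoid.closure_induction_right with
  | one => exact one
  | mul_right m _ s hs ih =>
    obtain ⟨i, rfl⟩ := hs
    exact mul_σ m i ih

theorem eq_one_or_exists_eq_mul_σ (m : BraidMonoid n) : m = 1 ∨ ∃ m' i, m = m' * σ i := by
  induction m using induction_mul_σ with
  | one => exact .inl rfl
  | mul_σ m i _ => exact .inr ⟨m, i, rfl⟩

/-- The word length on the braid monoid, which is well defined because the relations are
homogeneous. -/
def length (m : BraidMonoid n) : ℕ :=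
  (lift (s := fun _ => Multiplicative.ofAdd 1) ⟨fun _ _ _ => rfl, fun _ _ _ => rfl⟩ m).toAdd

@[simp]
theorem length_one : length (1 : BraidMonoid n) = 0 := by
  simp [length]

@[simp]
theorem length_mul_σ (m : BraidMonoid n) (i : Fin (n - 1)) :
    length (m * σ i) = length m + 1 := by
  simp [length]

end BraidMonoid

namespace BraidGroup

variable {n : ℕ} {G : Type*} [Group G]

/-- The generator `σᵢ` of the braid group. -/
def σ (i : Fin (n - 1)) : BraidGroup n :=
  PresentedGroup.of (rels := braidRels n) i

theorem isBraidFamily_σ : IsBraidFamily (σ : Fin (n - 1) → BraidGroup n) where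
  commute i j h := by
    have hrel := PresentedGroup.one_of_mem (rels := braidRels n) (Or.inl ⟨i, j, h, rfl⟩)
    simp only [map_mul, map_inv] at hrel
    exact mul_inv_eq_iff_eq_mul.1 (mul_inv_eq_one.1 hrel)
  braid i j h := PresentedGroup.mk_eq_mk_of_mul_inv_mem (rels := braidRels n)
    (Or.inr ⟨i, j, h, rfl⟩)

theorem closure_range_σ : Subgroup.closure (Set.range (σ : Fin (n - 1) → BraidGroup n)) = ⊤ :=
  PresentedGroup.closure_range_of (braidRels n)

/-- The homomorphism out of the braid group determined by a family satisfying the braid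
relations. -/
def lift {s : Fin (n - 1) → G} (hs : IsBraidFamily s) : BraidGroup n →* G :=
  PresentedGroup.toGroup (rels := braidRels n) (f := s) <| by
    rintro _ (⟨i, j, h, rfl⟩ | ⟨i, j, h, rfl⟩)
    · simp only [map_mul, map_inv, FreeGroup.lift_apply_of]
      rw [mul_inv_eq_one, mul_inv_eq_iff_eq_mul]
      exact hs.commute i j h
    · simp only [map_mul, map_inv, FreeGroup.lift_apply_of]
      rw [mul_inv_eq_one]
      exact hs.braid i j h

@[simp]
theorem lift_σ {s : Fin (n - 1) → G} (hs : IsBraidFamily s) (i : Fin (n - 1)) :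
    lift hs (σ i) = s i :=
  PresentedGroup.toGroup.of _

/-- The canonical homomorphism from the braid monoid to the braid group. -/
def ofMonoid : BraidMonoid n →* BraidGroup n :=
  BraidMonoid.lift isBraidFamily_σ

theorem ofMonoid_σ (i : Fin (n - 1)) : ofMonoid (BraidMonoid.σ i) = σ i :=
  BraidMonoid.lift_σ _ i

theorem exists_eq_ofMonoid_mul_inv (g : BraidGroup n) :
    ∃ a b : BraidMonoid n, g = ofMonoid a * (ofMonoid b)⁻¹ := by
  have hrange : Submonoid.closure (Set.range σ) ≤ MonoidHom.mrange (ofMonoid (n := n)) := by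
    rw [Submonoid.closure_le]
    rintro _ ⟨i, rfl⟩
    exact ⟨BraidMonoid.σ i, ofMonoid_σ i⟩
  obtain ⟨p, hp, r, hr, rfl⟩ :=
    isBraidFamily_σ.exists_eq_mul_inv (closure_range_σ ▸ Subgroup.mem_top g)
  obtain ⟨a, rfl⟩ := hrange hp
  obtain ⟨b, rfl⟩ := hrange hr
  exact ⟨a, b, rfl⟩

theorem injective_of_injective_comp_ofMonoid {M : Type*} [Monoid M] {ρ : BraidGroup n →* M}
    (hρ : Function.Injective (ρ.comp ofMonoid)) : Function.Injective ρ := by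
  rw [injective_iff_map_eq_one]
  intro g hg
  obtain ⟨a, b, rfl⟩ := exists_eq_ofMonoid_mul_inv g
  have hab : ρ (ofMonoid a) = ρ (ofMonoid b) := by
    calc ρ (ofMonoid a) = ρ (ofMonoid a * (ofMonoid b)⁻¹) * ρ (ofMonoid b) := by
          rw [← map_mul, inv_mul_cancel_right]
      _ = ρ (ofMonoid b) := by rw [hg, one_mul]
  rw [hρ hab, mul_inv_cancel]

end BraidGroup

namespace LawrenceKrammer

/-- The pairs `i < j` with `j < n`, stored as `⟨j, i⟩`. They index the standard basis of the
Lawrence–Krammer module. -/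
abbrev Pair (n : ℕ) : Type := Σ j : Fin n, Fin j

theorem card_pair (n : ℕ) : Fintype.card (Pair n) = n * (n - 1) / 2 := by
  simp only [Fintype.card_sigma, Fintype.card_fin]
  rw [Fin.sum_univ_eq_sum_range (fun i => i) n, Finset.sum_range_id]

section Generator

variable {n : ℕ} {R : Type*} [CommRing R]

/-- The coordinate of a vector at the pair `i < j < n`; it is `0` for all other `i` and `j`. -/
def coeff (i j : ℕ) : Module.Dual R (Pair n → R) :=
  if h : i < j ∧ j < n then LinearMap.proj ⟨⟨j, h.2⟩, ⟨i, h.1⟩⟩ else 0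

theorem coeff_apply {i j : ℕ} (hij : i < j) (hj : j < n) (f : Pair n → R) :
    coeff i j f = f ⟨⟨j, hj⟩, ⟨i, hij⟩⟩ := by
  rw [coeff, dif_pos ⟨hij, hj⟩, LinearMap.proj_apply]

theorem coeff_ext {f g : Pair n → R} (h : ∀ i j, i < j → j < n → coeff i j f = coeff i j g) :
    f = g := by
  ext ⟨⟨j, hj⟩, ⟨i, hi⟩⟩
  simpa only [coeff_apply hi hj] using h i j hi hj

theorem coeff_comp {S : Type*} [CommRing S] (φ : R →+* S) (f : Pair n → R) (i j : ℕ) :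
    coeff i j (φ ∘ f) = φ (coeff i j f) := by
  by_cases h : i < j ∧ j < n <;> simp [coeff, h]

/-- The action of the `k`-th braid generator on the Lawrence–Krammer module. A vector `f` stands for
the functional on Krammer's module which takes the value `f ⟨j, i⟩` at `q ^ i • x_{i,j}`, and the
generator acts by precomposition with Krammer's `σ_k`. The factors `q ^ i` remove the powers
`q ^ (k - i)` from Krammer's formulas. -/
def generator (q t : R) (k : ℕ) : Module.End R (Pair n → R) :=
  LinearMap.pi fun ⟨j, i⟩ =>
    if (i : ℕ) = k then
      if (j : ℕ) = k + 1 then (t * q ^ 2) • coeff k (k + 1)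
      else (t * q * (q - 1)) • coeff k (k + 1) + coeff (k + 1) j
    else if (i : ℕ) = k + 1 then q • coeff k j + (1 - q) • coeff (k + 1) j
    else if (j : ℕ) = k then (1 - q) • coeff i k + q • coeff i (k + 1)
    else if (j : ℕ) = k + 1 then coeff i k + (t * q * (q - 1)) • coeff k (k + 1)
    else if (i : ℕ) < k ∧ k + 1 < j then coeff i j + (t * (q - 1) ^ 2) • coeff k (k + 1)
    else coeff i j

variable (q t : R) {i j k : ℕ} (f : Pair n → R)

theorem coeff_generator_self (hi : i = k) (hj : j = k + 1) (hn : j < n) :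
    coeff i j (generator q t k f) = t * q ^ 2 * coeff k (k + 1) f := by
  subst hi hj
  simp [coeff_apply (Nat.lt_succ_self i) hn, generator]

theorem coeff_generator_left (hi : i = k) (hj : k + 1 < j) (hn : j < n) :
    coeff i j (generator q t k f) =
      t * q * (q - 1) * coeff k (k + 1) f + coeff (k + 1) j f := by
  rw [coeff_apply (by omega) hn]
  simp [generator, hi, hj.ne']

theorem coeff_generator_left_succ (hi : i = k + 1) (hj : k + 1 < j) (hn : j < n) :
    coeff i j (generator q t k f) = q * coeff k j f + (1 - q) * coeff (k + 1) j f := by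
  rw [coeff_apply (by omega) hn]
  simp [generator, hi]

theorem coeff_generator_right (hi : i < k) (hj : j = k) (hn : j < n) :
    coeff i j (generator q t k f) = (1 - q) * coeff i k f + q * coeff i (k + 1) f := by
  rw [coeff_apply (by omega) hn]
  simp [generator, hi.ne, hj, show i ≠ k + 1 by omega]

theorem coeff_generator_right_succ (hi : i < k) (hj : j = k + 1) (hn : j < n) :
    coeff i j (generator q t k f) = coeff i k f + t * q * (q - 1) * coeff k (k + 1) f := by
  rw [coeff_apply (by omega) hn]
  simp [generator, hi.ne, hj, show i ≠ k + 1 by omega]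

theorem coeff_generator_of_nested (hi : i < k) (hj : k + 1 < j) (hn : j < n) :
    coeff i j (generator q t k f) = coeff i j f + t * (q - 1) ^ 2 * coeff k (k + 1) f := by
  rw [coeff_apply (by omega) hn]
  simp [generator, hi, hj, hi.ne, hj.ne', show i ≠ k + 1 by omega, show j ≠ k by omega]

theorem coeff_generator_of_disjoint (hij : i < j) (h : j < k ∨ k + 1 < i) (hn : j < n) :
    coeff i j (generator q t k f) = coeff i j f := by
  rw [coeff_apply hij hn]
  simp [generator, show i ≠ k by omega, show i ≠ k + 1 by omega, show j ≠ k by omega,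
    show j ≠ k + 1 by omega, show ¬(i < k ∧ k + 1 < j) by omega]

theorem pair_cases (hij : i < j) (k : ℕ) :
    (i = k ∧ j = k + 1) ∨ (i = k ∧ k + 1 < j) ∨ (i = k + 1 ∧ k + 1 < j) ∨ (i < k ∧ j = k) ∨
      (i < k ∧ j = k + 1) ∨ (i < k ∧ k + 1 < j) ∨ (j < k ∨ k + 1 < i) := by
  omega

theorem generator_commute {l : ℕ} (hkl : k + 2 ≤ l) (hl : l + 1 < n) :
    Commute (generator q t k : Module.End R (Pair n → R)) (generator q t l) := by
  refine LinearMap.ext fun f => coeff_ext fun i j hij hj => ?_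
  simp only [Module.End.mul_apply]
  rcases pair_cases hij k with h | h | h | h | h | h | h <;>
  rcases pair_cases hij l with h' | h' | h' | h' | h' | h' | h' <;>
  first
  | omega
  | simp (disch := omega) only [coeff_generator_self, coeff_generator_left,
      coeff_generator_left_succ, coeff_generator_right, coeff_generator_right_succ,
      coeff_generator_of_nested, coeff_generator_of_disjoint]
    try ring

theorem generator_braid (hk : k + 2 < n) :
    (generator q t k * generator q t (k + 1) * generator q t k : Module.End R (Pair n → R)) =
      generator q t (k + 1) * generator q t k * generator q t (k + 1) := by
  refine LinearMap.ext fun f => coeff_ext fun i j hij hj => ?_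
  simp only [Module.End.mul_apply]
  have hi : i < k ∨ i = k ∨ i = k + 1 ∨ i = k + 1 + 1 ∨ k + 1 + 1 < i := by omega
  have hj : j < k ∨ j = k ∨ j = k + 1 ∨ j = k + 1 + 1 ∨ k + 1 + 1 < j := by omega
  rcases hi with hi | rfl | rfl | rfl | hi <;> rcases hj with hj | rfl | rfl | rfl | hj <;>
  first
  | omega
  | simp (disch := omega) only [coeff_generator_self, coeff_generator_left,
      coeff_generator_left_succ, coeff_generator_right, coeff_generator_right_succ,
      coeff_generator_of_nested, coeff_generator_of_disjoint]
    try ring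

theorem isBraidFamily_generator :
    IsBraidFamily fun k : Fin (n - 1) => (generator q t k : Module.End R (Pair n → R)) where
  commute i j h := generator_commute q t h (by omega)
  braid i j h := by rw [h]; exact generator_braid q t (by omega)

theorem generator_comp {S : Type*} [CommRing S] (φ : R →+* S) (k : ℕ) :
    generator (φ q) (φ t) k (φ ∘ f) = φ ∘ generator q t k f := by
  ext ⟨j, i⟩
  simp only [generator, LinearMap.pi_apply, Function.comp_apply]
  split_ifs <;> simp [coeff_comp]

end Generator

theorem isUnit_generator {n : ℕ} {K : Type*} [Field K] {q t : K} (hq : q ≠ 0) (ht : t ≠ 0) {k : ℕ}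
    (hk : k + 1 < n) : IsUnit (generator q t k : Module.End K (Pair n → K)) := by
  rw [LinearMap.isUnit_iff_ker_eq_bot, LinearMap.ker_eq_bot']
  intro f hf
  have hcoeff (i j : ℕ) : coeff i j (generator q t k f) = 0 := by rw [hf, map_zero]
  have hself : coeff k (k + 1) f = 0 := by
    simpa [coeff_generator_self q t f rfl rfl hk, hq, ht] using hcoeff k (k + 1)
  have hleft_succ (j : ℕ) (hj : k + 1 < j) (hn : j < n) : coeff (k + 1) j f = 0 := by
    simpa [coeff_generator_left q t f rfl hj hn, hself] using hcoeff k j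
  have hleft (j : ℕ) (hj : k + 1 < j) (hn : j < n) : coeff k j f = 0 := by
    simpa [coeff_generator_left_succ q t f rfl hj hn, hleft_succ j hj hn, hq] using
      hcoeff (k + 1) j
  have hright (i : ℕ) (hi : i < k) : coeff i k f = 0 := by
    simpa [coeff_generator_right_succ q t f hi rfl hk, hself] using hcoeff i (k + 1)
  have hright_succ (i : ℕ) (hi : i < k) : coeff i (k + 1) f = 0 := by
    simpa [coeff_generator_right q t f hi rfl (by omega), hright i hi, hq] using hcoeff i k
  refine coeff_ext fun i j hij hn => ?_
  rw [map_zero]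
  rcases pair_cases hij k with
    ⟨rfl, rfl⟩ | ⟨rfl, hj⟩ | ⟨rfl, hj⟩ | ⟨hi, rfl⟩ | ⟨hi, rfl⟩ | ⟨hi, hj⟩ | h
  · exact hself
  · exact hleft j hj hn
  · exact hleft_succ j hj hn
  · exact hright i hi
  · exact hright_succ i hi
  · simpa [coeff_generator_of_nested q t f hi hj hn, hself] using hcoeff i j
  · simpa [coeff_generator_of_disjoint q t f hij h hn] using hcoeff i j

section BasisVec

variable {n : ℕ} {R : Type*} [CommRing R]

/-- The standard basis vector at the pair `a < c < n`; it is `0` for all other `a` and `c`. -/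
def basisVec (a c : ℕ) : Pair n → R :=
  fun p => if (p.2 : ℕ) = a ∧ (p.1 : ℕ) = c then 1 else 0

theorem coeff_basisVec {i j : ℕ} (hij : i < j) (hj : j < n) (a c : ℕ) :
    coeff i j (basisVec a c : Pair n → R) = if i = a ∧ j = c then 1 else 0 :=
  coeff_apply hij hj _

theorem basisVec_ne_zero [Nontrivial R] {a c : ℕ} (hac : a < c) (hc : c < n) :
    (basisVec a c : Pair n → R) ≠ 0 := fun h => by
  simpa [coeff_basisVec hac hc] using congrArg (coeff a c) h

variable (q t : R) {r s : ℕ}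

theorem generator_zero_basisVec_self (hs : s + 1 < n) :
    generator q 0 s (basisVec s (s + 1) : Pair n → R) = 0 := by
  refine coeff_ext fun i j hij hj => ?_
  rcases pair_cases hij s with h | h | h | h | h | h | h <;>
    simp (disch := omega) [coeff_generator_self, coeff_generator_left,
      coeff_generator_left_succ, coeff_generator_right, coeff_generator_right_succ,
      coeff_generator_of_nested, coeff_generator_of_disjoint, coeff_basisVec] <;> omega

theorem generator_basisVec_of_far (h : r + 2 ≤ s ∨ s + 2 ≤ r) (hr : r + 1 < n) :
    generator q t r (basisVec s (s + 1) : Pair n → R) = basisVec s (s + 1) := by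
  refine coeff_ext fun i j hij hj => ?_
  rcases pair_cases hij r with h' | h' | h' | h' | h' | h' | h' <;>
    simp (disch := omega) only [coeff_generator_self, coeff_generator_left,
      coeff_generator_left_succ, coeff_generator_right, coeff_generator_right_succ,
      coeff_generator_of_nested, coeff_generator_of_disjoint, coeff_basisVec] <;>
    split_ifs <;> first | omega | ring

theorem generator_basisVec_of_adjacent (h : s = r + 1 ∨ r = s + 1) (hr : r + 1 < n) :
    generator q t r (basisVec s (s + 1) : Pair n → R) =
      (1 - q) • basisVec s (s + 1) + basisVec (min r s) (max r s + 1) := by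
  refine coeff_ext fun i j hij hj => ?_
  rcases pair_cases hij r with h' | h' | h' | h' | h' | h' | h' <;>
    simp (disch := omega) only [coeff_generator_self, coeff_generator_left,
      coeff_generator_left_succ, coeff_generator_right, coeff_generator_right_succ,
      coeff_generator_of_nested, coeff_generator_of_disjoint, coeff_basisVec, map_add, map_smul,
      smul_eq_mul] <;>
    split_ifs <;> first | omega | ring

theorem generator_basisVec_min_max (h : s = r + 1 ∨ r = s + 1) (hs : s + 1 < n) :
    generator q t s (basisVec (min r s) (max r s + 1) : Pair n → R) =
      q • basisVec r (r + 1) := by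
  refine coeff_ext fun i j hij hj => ?_
  rcases pair_cases hij s with h' | h' | h' | h' | h' | h' | h' <;>
    simp (disch := omega) only [coeff_generator_self, coeff_generator_left,
      coeff_generator_left_succ, coeff_generator_right, coeff_generator_right_succ,
      coeff_generator_of_nested, coeff_generator_of_disjoint, coeff_basisVec, map_smul,
      smul_eq_mul] <;>
    split_ifs <;> first | omega | ring

end BasisVec

section Positivity

variable {n : ℕ} {R : Type*} [CommRing R] [PartialOrder R]

theorem coeff_nonneg {f : Pair n → R} (hf : 0 ≤ f) (i j : ℕ) : 0 ≤ coeff i j f := by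
  by_cases h : i < j ∧ j < n
  · simpa [coeff, h] using hf _
  · simp [coeff, h]

variable [IsOrderedRing R]

theorem basisVec_nonneg (a c : ℕ) : 0 ≤ (basisVec a c : Pair n → R) := by
  intro p
  simp only [basisVec, Pi.zero_apply]
  split_ifs <;> simp

theorem generator_zero_nonneg {q : R} (hq0 : 0 ≤ q) (hq1 : q ≤ 1) (k : ℕ) {f : Pair n → R}
    (hf : 0 ≤ f) : 0 ≤ generator q 0 k f := by
  rintro ⟨j, i⟩
  have hcoeff (i j : ℕ) : 0 ≤ coeff i j f := coeff_nonneg hf i j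
  have hmul (a b c d : ℕ) : 0 ≤ (1 - q) * coeff a b f + q * coeff c d f :=
    add_nonneg (mul_nonneg (sub_nonneg.2 hq1) (hcoeff a b)) (mul_nonneg hq0 (hcoeff c d))
  simp only [generator, LinearMap.pi_apply]
  split_ifs <;> simp [hcoeff, hmul, add_comm (q * _)]

end Positivity

section MonoidRep

variable {n : ℕ} {R : Type*} [CommRing R]

/-- The action of the braid monoid on the Lawrence–Krammer module. -/
def monoidRep (q t : R) : BraidMonoid n →* Module.End R (Pair n → R) :=
  BraidMonoid.lift (isBraidFamily_generator q t)

variable {q t : R}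

theorem monoidRep_σ (k : Fin (n - 1)) : monoidRep q t (BraidMonoid.σ k) = generator q t k :=
  BraidMonoid.lift_σ _ k

theorem monoidRep_mul_σ_apply (m : BraidMonoid n) (k : Fin (n - 1)) (f : Pair n → R) :
    monoidRep q t (m * BraidMonoid.σ k) f = monoidRep q t m (generator q t k f) := by
  rw [map_mul, monoidRep_σ, Module.End.mul_apply]

variable {S : Type*} [CommRing S] {m m' : BraidMonoid n}

theorem monoidRep_comp (φ : R →+* S) (m : BraidMonoid n) (f : Pair n → R) :
    monoidRep (φ q) (φ t) m (φ ∘ f) = φ ∘ monoidRep q t m f := by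
  induction m using BraidMonoid.induction_mul_σ generalizing f with
  | one => simp only [map_one, Module.End.one_apply]
  | mul_σ m k ih => rw [monoidRep_mul_σ_apply, monoidRep_mul_σ_apply, generator_comp, ih]

theorem monoidRep_eq_of_injective {φ : R →+* S} (hφ : Function.Injective φ)
    (h : monoidRep (φ q) (φ t) m = monoidRep (φ q) (φ t) m') :
    monoidRep q t m = monoidRep q t m' := by
  refine LinearMap.ext fun f => hφ.comp_left ?_
  simp only [← monoidRep_comp, h]

theorem monoidRep_eq_of_surjective {φ : R →+* S} (hφ : Function.Surjective φ)
    (h : monoidRep q t m = monoidRep q t m') :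
    monoidRep (φ q) (φ t) m = monoidRep (φ q) (φ t) m' := by
  refine LinearMap.ext fun f => ?_
  obtain ⟨f, rfl⟩ := hφ.comp_left f
  simp only [monoidRep_comp, h]

-- A transcendental `t` can be specialised to `0` through the polynomial ring `R[X]`.
theorem monoidRep_zero_eq_of_transcendental [Algebra R S] {τ : S} (hτ : Transcendental R τ)
    (h : monoidRep (algebraMap R S q) τ m = monoidRep (algebraMap R S q) τ m') :
    monoidRep q 0 m = monoidRep q 0 m' := by
  have hpoly : monoidRep (Polynomial.C q) Polynomial.X m =
      monoidRep (Polynomial.C q) Polynomial.X m' :=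
    monoidRep_eq_of_injective (φ := (Polynomial.aeval τ : Polynomial R →ₐ[R] S).toRingHom)
      (transcendental_iff_injective.1 hτ) (by simpa using h)
  simpa using monoidRep_eq_of_surjective (φ := Polynomial.evalRingHom 0)
    (fun a => ⟨Polynomial.C a, by simp⟩) hpoly

end MonoidRep

section Descent

variable {n : ℕ} {k : Type*} [CommRing k] [LinearOrder k] [IsStrictOrderedRing k] {q : k}

theorem monoidRep_zero_nonneg (hq0 : 0 ≤ q) (hq1 : q ≤ 1) (m : BraidMonoid n) {f : Pair n → k}
    (hf : 0 ≤ f) : 0 ≤ monoidRep q 0 m f := by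
  induction m using BraidMonoid.induction_mul_σ generalizing f with
  | one => simpa
  | mul_σ m i ih =>
    rw [monoidRep_mul_σ_apply]
    exact ih (generator_zero_nonneg hq0 hq1 i hf)

theorem monoidRep_zero_eq_zero_of_smul_add (hq0 : 0 ≤ q) (hq1 : q ≤ 1) {m : BraidMonoid n}
    {c : k} (hc : 0 < c) {f g : Pair n → k} (hf : 0 ≤ f) (hg : 0 ≤ g)
    (h : monoidRep q 0 m (c • f + g) = 0) : monoidRep q 0 m f = 0 ∧ monoidRep q 0 m g = 0 := by
  have hf' := smul_nonneg hc.le (monoidRep_zero_nonneg hq0 hq1 m hf)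
  have hg' := monoidRep_zero_nonneg hq0 hq1 m hg
  rw [map_add, map_smul, add_eq_zero_iff_of_nonneg hf' hg', smul_eq_zero_iff_right hc.ne'] at h
  exact h

open BraidMonoid in
theorem exists_eq_mul_σ_of_monoidRep_zero_eq_zero (hq0 : 0 < q) (hq1 : q < 1)
    (m : BraidMonoid n) (s : Fin (n - 1))
    (h : monoidRep q 0 m (basisVec s (s + 1)) = 0) : ∃ m', m = m' * σ s := by
  induction hl : m.length using Nat.strong_induction_on generalizing m s with
  | _ l ih =>
  subst hl
  obtain rfl | ⟨m, r, rfl⟩ := m.eq_one_or_exists_eq_mul_σ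
  · exact absurd h (basisVec_ne_zero (by omega) (by omega))
  rw [monoidRep_mul_σ_apply] at h
  rw [length_mul_σ] at ih
  obtain rfl | hfar | hadj : r = s ∨ ((r : ℕ) + 2 ≤ s ∨ (s : ℕ) + 2 ≤ r) ∨
      ((s : ℕ) = r + 1 ∨ (r : ℕ) = s + 1) := by omega
  · exact ⟨m, rfl⟩
  · rw [generator_basisVec_of_far _ _ hfar (by omega)] at h
    obtain ⟨m, rfl⟩ := ih _ (Nat.lt_succ_self _) m s h rfl
    have hcomm : Commute (σ s) (σ r) := hfar.elim
      (fun h => (isBraidFamily_σ.commute r s h).symm) (isBraidFamily_σ.commute s r)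
    exact ⟨m * σ r, by rw [mul_assoc, hcomm.eq, mul_assoc]⟩
  · rw [generator_basisVec_of_adjacent _ _ hadj (by omega)] at h
    obtain ⟨hs, hg⟩ := monoidRep_zero_eq_zero_of_smul_add hq0.le hq1.le (sub_pos.2 hq1)
      (basisVec_nonneg _ _) (basisVec_nonneg _ _) h
    obtain ⟨m, rfl⟩ := ih _ (Nat.lt_succ_self _) m s hs rfl
    rw [monoidRep_mul_σ_apply, generator_basisVec_min_max _ _ hadj (by omega), map_smul,
      smul_eq_zero_iff_right hq0.ne'] at hg
    obtain ⟨m, rfl⟩ := ih _ (by simp only [length_mul_σ]; omega) m r hg rfl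
    have hbraid : σ r * σ s * σ r = σ s * σ r * σ s :=
      hadj.elim (isBraidFamily_σ.braid r s) fun h => (isBraidFamily_σ.braid s r h).symm
    exact ⟨m * σ s * σ r, by simpa only [mul_assoc] using congrArg (m * ·) hbraid⟩

end Descent

section Transcendental

variable {k L : Type*} [CommRing k] [CommRing L] [Algebra k L] {t : L}

theorem ne_zero_of_transcendental [Nontrivial k] (ht : Transcendental k t) : t ≠ 0 := by
  rintro rfl
  exact ht isAlgebraic_zero

theorem algebraMap_ne_zero_of_transcendental (ht : Transcendental k t) {q : k} (hq : q ≠ 0) :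
    algebraMap k L q ≠ 0 := by
  have hmap := (transcendental_iff_injective.1 ht).comp Polynomial.C_injective
  rw [← Polynomial.aeval_C t]
  exact hmap.ne_iff' (by simp) |>.2 hq

end Transcendental

section Rep

variable {n : ℕ} {L : Type*} [Field L]

/-- The action of the braid group on the Lawrence–Krammer module. -/
noncomputable def rep {q t : L} (hq : q ≠ 0) (ht : t ≠ 0) :
    BraidGroup n →* Module.End L (Pair n → L) :=
  (Units.coeHom _).comp <| BraidGroup.lift <|
    (isBraidFamily_generator q t).unit fun _ => isUnit_generator hq ht (by omega)

theorem rep_comp_ofMonoid {q t : L} (hq : q ≠ 0) (ht : t ≠ 0) :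
    (rep hq ht).comp BraidGroup.ofMonoid = monoidRep (n := n) q t :=
  BraidMonoid.hom_ext fun k => by simp [rep, BraidGroup.ofMonoid_σ, monoidRep_σ]

variable {k : Type*} [CommRing k] [LinearOrder k] [IsStrictOrderedRing k] [Algebra k L] {q : k}
  {t : L}

open BraidMonoid in
theorem monoidRep_injective (hq0 : 0 < q) (hq1 : q < 1) (ht : Transcendental k t) :
    Function.Injective (monoidRep (n := n) (algebraMap k L q) t) := by
  have hdiv (m m' : BraidMonoid n) (s : Fin (n - 1))
      (h : monoidRep (algebraMap k L q) t (m * σ s) = monoidRep (algebraMap k L q) t m') :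
      ∃ m'', m' = m'' * σ s := by
    refine exists_eq_mul_σ_of_monoidRep_zero_eq_zero hq0 hq1 m' s ?_
    rw [← monoidRep_zero_eq_of_transcendental ht h, monoidRep_mul_σ_apply,
      generator_zero_basisVec_self q (by omega), map_zero]
  intro m m' h
  induction m using BraidMonoid.induction_mul_σ generalizing m' with
  | one =>
    obtain rfl | ⟨m', s, rfl⟩ := m'.eq_one_or_exists_eq_mul_σ
    · rfl
    · obtain ⟨m'', hm''⟩ := hdiv m' 1 s h.symm
      simpa using congrArg length hm''
  | mul_σ m s ih =>
    obtain ⟨m', rfl⟩ := hdiv m m' s h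
    have hunit : IsUnit (generator (algebraMap k L q) t s : Module.End L (Pair n → L)) :=
      isUnit_generator (algebraMap_ne_zero_of_transcendental ht hq0.ne')
        (ne_zero_of_transcendental ht) (by omega)
    simp only [map_mul, monoidRep_σ] at h
    rw [ih (hunit.mul_right_cancel h)]

theorem rep_injective (hq0 : 0 < q) (hq1 : q < 1) (ht : Transcendental k t) :
    Function.Injective
      (rep (n := n) (algebraMap_ne_zero_of_transcendental ht hq0.ne')
        (ne_zero_of_transcendental ht)) := by
  apply BraidGroup.injective_of_injective_comp_ofMonoid
  rw [rep_comp_ofMonoid]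
  exact monoidRep_injective hq0 hq1 ht

end Rep

end LawrenceKrammer

theorem exists_transcendental_rat_real : ∃ τ : ℝ, Transcendental ℚ τ :=
  ⟨liouvilleNumber (2 : ℕ), fun h => transcendental_liouvilleNumber le_rfl
    ((IsFractionRing.isAlgebraic_iff ℤ ℚ ℝ).2 h)⟩

/-- For every `n ≥ 2`, the quotient `B_n / C(B_n)` of the braid group by its center
embeds into `GL((n(n-1)/2)², ℝ)`; in particular it is linear. -/
theorem stmt_8 (n : ℕ) (hn : 2 ≤ n) :
    ∃ φ : BraidGroup n ⧸ Subgroup.center (BraidGroup n) →*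
        Matrix.GeneralLinearGroup (Fin ((n * (n - 1) / 2) ^ 2)) ℝ,
      Function.Injective φ := by
  obtain ⟨τ, hτ⟩ := exists_transcendental_rat_real
  have hrep := LawrenceKrammer.rep_injective (n := n) (q := (1 / 2 : ℚ)) (by norm_num)
    (by norm_num) hτ
  have hfinrank : Module.finrank ℝ (Module.End ℝ (LawrenceKrammer.Pair n → ℝ)) =
      (n * (n - 1) / 2) ^ 2 := by
    rw [Module.finrank_linearMap, Module.finrank_fintype_fun_eq_card, LawrenceKrammer.card_pair,
      pow_two]
  rw [← hfinrank]
  exact exists_injective_quotient_center_hom_GL hrep
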